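/- arXiv:2604.10294 — 5 statements merged into one kernel-verified Lean document; each statement's English description precedes it below -/
import Mathlib

section
/- Let $a,b$ be positive integers with $\gcd(a,b)=1$ and let $n$ be a positive integer. Let $a'(n)$ be the unique integer with $a'(n) \equiv -n a^{-1} \pmod{b}$ and $1 \le a'(n) \le b$, and let $b'(n)$ be the unique integer with $b'(n) \equiv -n b^{-1} \pmod{a}$ and $1 \le b'(n) \le a$. Then the number of pairs $(x,y)$ of nonnegative integers satisfying $ax + by = n$ equals $\frac{n + a\,a'(n) + b\,b'(n)}{ab} - 1$. -/
/-!
The sum `n + a a' + b b'` is divisible by both `a` and `b`, hence equals `a b (m + 1)` for some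
natural number `m`. If `a x + b y = n`, then `x ≡ -a' (mod b)`, so `x = b j - a'` for an integer `j`,
and substituting gives `y = a (m + 1 - j) - b'`. As `1 ≤ a' ≤ b` and `1 ≤ b' ≤ a`, these are
nonnegative exactly when `1 ≤ j ≤ m`, so there are `m` solutions.
-/

/-- Tripathi (2000): the number of nonnegative integer solutions of `a*x + b*y = n`
is `(n + a*a'(n) + b*b'(n)) / (a*b) - 1`, where `a'(n)` is the unique integer with
`a * a'(n) ≡ -n (mod b)` and `1 ≤ a'(n) ≤ b`, and `b'(n)` is the unique integer with
`b * b'(n) ≡ -n (mod a)` and `1 ≤ b'(n) ≤ a`. -/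
theorem tripathi_count_two_vars
    (a b n : ℕ) (ha : 0 < a) (hb : 0 < b) (hn : 0 < n) (hab : Nat.Coprime a b)
    (a' b' : ℤ)
    (ha' : (a : ℤ) * a' ≡ -(n : ℤ) [ZMOD (b : ℤ)]) (ha'range : 1 ≤ a' ∧ a' ≤ (b : ℤ))
    (hb' : (b : ℤ) * b' ≡ -(n : ℤ) [ZMOD (a : ℤ)]) (hb'range : 1 ≤ b' ∧ b' ≤ (a : ℤ)) :
    (Set.ncard {p : ℕ × ℕ | a * p.1 + b * p.2 = n} : ℚ) =
      ((n : ℚ) + (a : ℚ) * (a' : ℚ) + (b : ℚ) * (b' : ℚ)) / ((a : ℚ) * (b : ℚ)) - 1 := by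
  obtain ⟨h1, h2⟩ := ha'range
  obtain ⟨h3, h4⟩ := hb'range
  have haZ : (0 : ℤ) < a := by exact_mod_cast ha
  have hbZ : (0 : ℤ) < b := by exact_mod_cast hb
  have hnZ : (0 : ℤ) < n := by exact_mod_cast hn
  have hcop : IsCoprime (a : ℤ) (b : ℤ) := Nat.isCoprime_iff_coprime.mpr hab
  obtain ⟨u, hu⟩ := ha'.symm.dvd
  obtain ⟨v, hv⟩ := hb'.symm.dvd
  have hdvd : (a : ℤ) * b ∣ n + a * a' + b * b' :=
    hcop.mul_dvd ⟨v + a', by linarith⟩ ⟨u + b', by linarith⟩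
  obtain ⟨k, hk⟩ := hdvd
  have hkpos : 0 < k := by
    have : 0 < (a : ℤ) * b * k := by rw [← hk]; positivity
    exact pos_of_mul_pos_right this (by positivity)
  obtain ⟨m, rfl⟩ : ∃ m : ℕ, k = m + 1 := ⟨(k - 1).toNat, by omega⟩
  -- The solution with index `i` is the one with `j = i + 1`.
  have hset : {p : ℕ × ℕ | a * p.1 + b * p.2 = n} =
      (fun i : ℕ => (((b : ℤ) * (i + 1) - a').toNat, ((a : ℤ) * (m - i) - b').toNat)) ''
        (Finset.range m : Set ℕ) := by
    ext ⟨x, y⟩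
    simp only [Set.mem_setOf_eq, Set.mem_image, Finset.coe_range, Set.mem_Iio, Prod.mk.injEq]
    constructor
    · intro h
      have hZ : (a : ℤ) * x + b * y = n := by exact_mod_cast h
      obtain ⟨j, hj⟩ : (b : ℤ) ∣ x + a' :=
        hcop.symm.dvd_of_dvd_mul_left ⟨u - y, by linarith⟩
      have hy : (y : ℤ) + b' = a * (m + 1 - j) := by
        apply mul_left_cancel₀ hbZ.ne'
        linear_combination hZ + hk - a * hj
      have hj0 : 0 < j := by
        refine pos_of_mul_pos_right (a := (b : ℤ)) ?_ hbZ.le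
        omega
      have hjm : 0 < (m : ℤ) + 1 - j := by
        refine pos_of_mul_pos_right (a := (a : ℤ)) ?_ haZ.le
        omega
      refine ⟨(j - 1).toNat, by omega, ?_, ?_⟩
      · rw [Int.toNat_of_nonneg (by omega), sub_add_cancel, ← hj]
        omega
      · rw [Int.toNat_of_nonneg (by omega), show (m : ℤ) - (j - 1) = m + 1 - j by ring, ← hy]
        omega
    · rintro ⟨i, hi, hx, hy⟩
      have hiZ : (i : ℤ) + 1 ≤ m := by exact_mod_cast hi
      have e1 : (x : ℤ) = b * (i + 1) - a' := by
        rw [← hx, Int.toNat_of_nonneg]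
        nlinarith
      have e2 : (y : ℤ) = a * (m - i) - b' := by
        rw [← hy, Int.toNat_of_nonneg]
        nlinarith
      have : (a : ℤ) * x + b * y = n := by
        rw [e1, e2]
        linear_combination -hk
      exact_mod_cast this
  have hinj : Set.InjOn
      (fun i : ℕ => (((b : ℤ) * (i + 1) - a').toNat, ((a : ℤ) * (m - i) - b').toNat))
      (Finset.range m : Set ℕ) := by
    intro i _ i' _ h
    have h5 := congrArg Prod.fst h
    have p1 : 0 ≤ (b : ℤ) * (i + 1) - a' := by nlinarith
    have p2 : 0 ≤ (b : ℤ) * (i' + 1) - a' := by nlinarith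
    have h6 : (b : ℤ) * (i + 1) = b * (i' + 1) := by
      dsimp only at h5
      omega
    have := mul_left_cancel₀ hbZ.ne' h6
    omega
  rw [hset, Set.ncard_image_of_injOn hinj, Set.ncard_coe_finset, Finset.card_range]
  have hkQ : (n : ℚ) + a * a' + b * b' = a * b * (m + 1) := by exact_mod_cast hk
  have haQ : (a : ℚ) ≠ 0 := by exact_mod_cast ha.ne'
  have hbQ : (b : ℚ) ≠ 0 := by exact_mod_cast hb.ne'
  rw [hkQ, mul_div_cancel_left₀ _ (mul_ne_zero haQ hbQ)]
  ring
end

section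
/- Let $a,b,c,n$ be positive integers with $a,b,c$ pairwise coprime. Define $b'_1$ as the unique integer with $b'_1 \equiv -n b^{-1} \pmod a$, $1 \le b'_1 \le a$; $c'_1$ with $c'_1 \equiv b c^{-1} \pmod a$, $1 \le c'_1 \le a$; $c'_2$ with $c'_2 \equiv -n c^{-1} \pmod b$, $1 \le c'_2 \le b$; $a'_2$ with $a'_2 \equiv c a^{-1} \pmod b$, $1 \le a'_2 \le b$; $a'_3$ with $a'_3 \equiv -n a^{-1} \pmod c$, $1 \le a'_3 \le c$; and $b'_3$ with $b'_3 \equiv a b^{-1} \pmod c$, $1 \le b'_3 \le c$. Let $N_1 = n(n+a+b+c) + cb\,b'_1(a+1-c'_1(b'_1-1)) + ac\,c'_2(b+1-a'_2(c'_2-1)) + ba\,a'_3(c+1-b'_3(a'_3-1))$. Then the number of triples $(x,y,z)$ of nonnegative integers with $ax+by+cz = n$ equals $\frac{N_1}{2abc} + \sum_{j=1}^{b'_1-1} \lfloor jc'_1/a \rfloor + \sum_{j=1}^{c'_2-1} \lfloor ja'_2/b \rfloor + \sum_{j=1}^{a'_3-1} \lfloor jb'_3/c \rfloor - 2$. -/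
/-!
For a modulus `m` and units `p`, `q` of `ℤ/m`, put
`F(x) = (1/m) ∑_{j < k} ((m+1)/2 - (j p q⁻¹ mod m))`, where `1 ≤ k ≤ m` and `k ≡ -x p⁻¹ mod m`.
Writing `⌊j c₁ / a⌋ = (j c₁ - (j c₁ mod a)) / a`, the claimed count becomes
`R(n) = n (n + a + b + c) / (2abc) + F_a(n) + F_b(n) + F_c(n) - 2`.

The function `F` satisfies `F(x) - F(x - p) = 1 - (x q⁻¹ mod m)/m - (m+1)/(2m)` (adding `p` to `x`
drops one summand), and, less obviously, the same identity with `p` and `q` exchanged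
(`dedekindPart_sub_right`): the defect of the latter is invariant under translation by `p`, hence
constant, and it has mean zero over `ℤ/m`.

Consequently `R(n + a) - R(n)` is Popoviciu's expression for the number of solutions of
`b y + c z = n + a`, which is also the increment of the true count: split the solutions for `n + a`
according to whether `x = 0`. The same holds for the step `b`, so the difference of the count and
`R` is invariant under the coprime translations `n ↦ n + a` and `n ↦ n + b`, hence constant, and it
vanishes at `n = 0`. Popoviciu's formula itself is proved by the same invariance argument.
-/

/-- A function on `ℕ` invariant under two coprime translations is constant. -/
lemma eq_zero_value_of_coprime_periods (g : ℕ → ℚ) (a b : ℕ) (hb : 0 < b)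
    (hab : Nat.Coprime a b) (h1 : ∀ n, g (n + a) = g n) (h2 : ∀ n, g (n + b) = g n) (n : ℕ) :
    g n = g 0 := by
  have ka : ∀ k n, g (n + k * a) = g n := by
    intro k
    induction k with
    | zero => simp
    | succ k ih => intro n; rw [Nat.succ_mul, ← add_assoc, h1, ih]
  have kb : ∀ k n, g (n + k * b) = g n := by
    intro k
    induction k with
    | zero => simp
    | succ k ih => intro n; rw [Nat.succ_mul, ← add_assoc, h2, ih]
  have step : ∀ n, g (n + 1) = g n := by
    intro n
    rcases Nat.lt_or_ge 1 b with h | h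
    · obtain ⟨x, hx⟩ := Nat.exists_mul_mod_eq_one_of_coprime hab h
      have h3 := Nat.div_add_mod (a * x) b
      rw [hx.2] at h3
      rw [← kb (a * x / b) (n + 1), ← ka x n]
      congr 1
      linarith
    · obtain rfl : b = 1 := by omega
      exact h2 n
  induction n with
  | zero => rfl
  | succ n ih => rw [step, ih]

/-! ### The periodic part -/

/-- The least nonnegative residue of a class modulo `m`, as a rational number. -/
def residue {m : ℕ} (x : ZMod m) : ℚ := (x.val : ℚ)

/-- The `m`-periodic part of the solution count, in terms of the units `p`, `q` modulo `m`. The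
number of summands is the representative of `-x / p` in `{1, …, m}`. -/
def dedekindPart (m : ℕ) (p q x : ZMod m) : ℚ :=
  (1 / (m : ℚ)) * ∑ j ∈ Finset.range (m - (x * p⁻¹).val),
    (((m : ℚ) + 1) / 2 - residue ((j : ZMod m) * p * q⁻¹))

section
variable {m : ℕ} [NeZero m]

lemma residue_sub_one (y : ZMod m) :
    residue (y - 1) = residue y - 1 + (if y = 0 then (m : ℚ) else 0) := by
  unfold residue
  obtain ⟨k, rfl⟩ := Nat.exists_eq_succ_of_ne_zero (NeZero.ne m)
  split_ifs with h
  · subst h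
    simp [ZMod.val_neg_one]
  · have h0 : y.val ≠ 0 := by rwa [Ne, ZMod.val_eq_zero]
    have h1 : (y - 1) = ((y.val - 1 : ℕ) : ZMod (k+1)) := by
      rw [Nat.cast_sub (by omega)]; simp
    have h2 := ZMod.val_lt y
    rw [h1, ZMod.val_natCast, Nat.mod_eq_of_lt (by omega), Nat.cast_sub (by omega)]
    simp

lemma residue_neg (y : ZMod m) :
    residue (-y) = (if y = 0 then 0 else (m : ℚ)) - residue y := by
  unfold residue
  rw [ZMod.neg_val]
  split_ifs with h
  · simp [h]
  · rw [Nat.cast_sub (ZMod.val_lt y).le]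

lemma sum_range_natCast (g : ZMod m → ℚ) :
    ∑ j ∈ Finset.range m, g (j : ZMod m) = ∑ x : ZMod m, g x := by
  refine Finset.sum_bij' (fun j _ => (j : ZMod m)) (fun x _ => x.val) ?_ ?_ ?_ ?_ ?_
  · simp
  · intro x _; simpa using ZMod.val_lt x
  · intro j hj; exact ZMod.val_cast_of_lt (by simpa using hj)
  · simp
  · simp

lemma sum_residue : ∑ x : ZMod m, residue x = (m : ℚ) * (m - 1) / 2 := by
  rw [← sum_range_natCast]
  have h : ∀ j ∈ Finset.range m, residue (j : ZMod m) = (j : ℚ) := by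
    intro j hj
    unfold residue
    rw [ZMod.val_cast_of_lt (by simpa using hj)]
  rw [Finset.sum_congr rfl h]
  have : ∀ k : ℕ, ∑ j ∈ Finset.range k, (j : ℚ) = (k : ℚ) * (k - 1) / 2 := by
    intro k
    induction k with
    | zero => simp
    | succ k ih => rw [Finset.sum_range_succ, ih]; push_cast; ring
  exact this m

lemma sum_residue_mul {u : ZMod m} (hu : IsUnit u) :
    ∑ x : ZMod m, residue (x * u) = (m : ℚ) * (m - 1) / 2 := by
  obtain ⟨u, rfl⟩ := hu
  rw [← sum_residue]
  exact Equiv.sum_comp (Units.mulRight u) residue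

lemma isUnit_zmod_inv {p : ZMod m} (hp : IsUnit p) : IsUnit p⁻¹ :=
  IsUnit.of_mul_eq_one p (ZMod.inv_mul_of_unit p hp)

lemma dedekindPart_zero {p q : ZMod m} (hp : IsUnit p) (hq : IsUnit q) :
    dedekindPart m p q 0 = 1 := by
  have hm : (m : ℚ) ≠ 0 := Nat.cast_ne_zero.2 (NeZero.ne m)
  unfold dedekindPart
  have h := sum_range_natCast (m := m)
    (fun x => ((m : ℚ) + 1) / 2 - residue (x * (p * q⁻¹)))
  rw [Finset.sum_sub_distrib, Finset.sum_const, Finset.sum_sub_distrib,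
    sum_residue_mul (hp.mul (isUnit_zmod_inv hq))] at h
  simp only [zero_mul, ZMod.val_zero, Nat.sub_zero, mul_assoc]
  rw [Finset.sum_sub_distrib, Finset.sum_const, h]
  simp [ZMod.card]
  field_simp
  ring

lemma dedekindPart_sub_left {p q : ZMod m} (hp : IsUnit p) (hq : IsUnit q) (x : ZMod m) :
    dedekindPart m p q x - dedekindPart m p q (x - p) =
      1 - residue (x * q⁻¹) / m - ((m : ℚ) + 1) / (2 * m) := by
  have hm : (m : ℚ) ≠ 0 := Nat.cast_ne_zero.2 (NeZero.ne m)
  have hpp : p * p⁻¹ = 1 := ZMod.mul_inv_of_unit p hp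
  obtain ⟨k, hk⟩ := Nat.exists_eq_succ_of_ne_zero (NeZero.ne m)
  by_cases hx : x = 0
  · -- The sum for `x = 0` is the full period and that for `-p` has the single term `j = 0`.
    subst hx
    rw [dedekindPart_zero hp hq]
    have h1 : ((0 - p) * p⁻¹) = -1 := by rw [zero_sub, neg_mul, hpp]
    have h2 : m - ((0 - p) * p⁻¹).val = 1 := by
      rw [h1]; subst hk; rw [ZMod.val_neg_one]; omega
    unfold dedekindPart
    rw [h2]
    simp [residue]
    field_simp
  · have hy : x * p⁻¹ ≠ 0 := by
      intro h
      apply hx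
      calc x = (x * p⁻¹) * p := by rw [mul_assoc, mul_comm p⁻¹, hpp, mul_one]
        _ = 0 := by rw [h, zero_mul]
    have hy' : x * q⁻¹ ≠ 0 := by
      intro h
      apply hx
      calc x = (x * q⁻¹) * q := by
            rw [mul_assoc, mul_comm q⁻¹, ZMod.mul_inv_of_unit q hq, mul_one]
        _ = 0 := by rw [h, zero_mul]
    have h1 : (x - p) * p⁻¹ = x * p⁻¹ - 1 := by rw [sub_mul, hpp]
    have h2 := residue_sub_one (x * p⁻¹)
    rw [if_neg hy] at h2
    have h3 : (x * p⁻¹ - 1).val + 1 = (x * p⁻¹).val := by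
      unfold residue at h2
      have : (((x * p⁻¹ - 1).val + 1 : ℕ) : ℚ) = (x * p⁻¹).val := by
        push_cast; linarith
      exact_mod_cast this
    have h4 := ZMod.val_lt (x * p⁻¹)
    have h5 : m - ((x - p) * p⁻¹).val = (m - (x * p⁻¹).val) + 1 := by
      rw [h1]; omega
    have h6 : ((m - (x * p⁻¹).val : ℕ) : ZMod m) * p * q⁻¹ = -(x * q⁻¹) := by
      rw [Nat.cast_sub h4.le]
      simp only [CharP.cast_eq_zero, ZMod.natCast_val, ZMod.cast_id', id_eq, zero_sub]
      calc -(x * p⁻¹) * p * q⁻¹ = -(x * q⁻¹) * (p * p⁻¹) := by ring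
        _ = _ := by rw [hpp, mul_one]
    unfold dedekindPart
    rw [h5, Finset.sum_range_succ, h6, residue_neg, if_neg hy']
    field_simp
    ring

/-- The step identity is symmetric in `p` and `q` although the definition of `dedekindPart` is
not. -/
lemma dedekindPart_sub_right {p q : ZMod m} (hp : IsUnit p) (hq : IsUnit q) (x : ZMod m) :
    dedekindPart m p q x - dedekindPart m p q (x - q) =
      1 - residue (x * p⁻¹) / m - ((m : ℚ) + 1) / (2 * m) := by
  have hm : (m : ℚ) ≠ 0 := Nat.cast_ne_zero.2 (NeZero.ne m)
  have hpp : p * p⁻¹ = 1 := ZMod.mul_inv_of_unit p hp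
  have hqq : q * q⁻¹ = 1 := ZMod.mul_inv_of_unit q hq
  set D : ZMod m → ℚ := fun x => dedekindPart m p q x - dedekindPart m p q (x - q) -
    (1 - residue (x * p⁻¹) / m - ((m : ℚ) + 1) / (2 * m)) with hD
  have zero_iff : ∀ {u : ZMod m} (y : ZMod m), IsUnit u → (y * u = 0 ↔ y = 0) :=
    fun y hu => hu.mul_left_eq_zero
  have hstep : ∀ y, D (y - p) = D y := by
    intro y
    have e1 := dedekindPart_sub_left hp hq y
    have e2 := dedekindPart_sub_left hp hq (y - q)
    have e3 := residue_sub_one (y * q⁻¹)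
    have e4 := residue_sub_one (y * p⁻¹)
    rw [sub_mul, hqq, e3] at e2
    simp only [zero_iff y (isUnit_zmod_inv hq)] at e2
    simp only [zero_iff y (isUnit_zmod_inv hp)] at e4
    simp only [hD]
    rw [sub_mul, hpp, e4, sub_right_comm y p q]
    linear_combination e2 - e1
  have hconst : ∀ k : ℕ, D (0 - k * p) = D 0 := by
    intro k
    induction k with
    | zero => simp
    | succ k ih =>
      rw [← ih, ← hstep (0 - k * p)]
      congr 1
      push_cast
      ring
  have hall : ∀ y, D y = D 0 := by
    intro y
    rw [← hconst ((-y * p⁻¹).val)]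
    congr 1
    simp only [ZMod.natCast_val, ZMod.cast_id', id_eq]
    linear_combination (-y) * hpp
  have hsum : ∑ y, D y = 0 := by
    simp only [hD, Finset.sum_sub_distrib, ← Finset.sum_div]
    rw [sum_residue_mul (isUnit_zmod_inv hp),
      show ∑ y, dedekindPart m p q (y - q) = ∑ y, dedekindPart m p q y from
        Equiv.sum_comp (Equiv.subRight q) (dedekindPart m p q)]
    simp [ZMod.card]
    field_simp
    ring
  rw [Finset.sum_congr rfl (fun y _ => hall y)] at hsum
  have h0 : D 0 = 0 := by
    simpa [ZMod.card, hm, NeZero.ne m] using hsum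
  have hx : D x = 0 := (hall x).trans h0
  simp only [hD] at hx
  linarith

end

/-! ### Two variables: Popoviciu's formula -/

/-- Number of solutions of `p y + q z = n` in nonnegative integers. -/
noncomputable def count2 (p q n : ℕ) : ℕ := {s : ℕ × ℕ | p * s.1 + q * s.2 = n}.ncard

/-- Number of solutions of `a x + b y + c z = n` in nonnegative integers. -/
noncomputable def count3 (a b c n : ℕ) : ℕ :=
  {s : ℕ × ℕ × ℕ | a * s.1 + b * s.2.1 + c * s.2.2 = n}.ncard

/-- Splitting off the solutions whose first coordinate vanishes, with the other coordinates
collected in `T`. -/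
lemma ncard_first_coordinate {T : Type*} (a n : ℕ) (w : T → ℕ)
    (hfin : ∀ n, {s : ℕ × T | a * s.1 + w s.2 = n}.Finite) :
    {s : ℕ × T | a * s.1 + w s.2 = n + a}.ncard =
      {s : ℕ × T | a * s.1 + w s.2 = n}.ncard + {t : T | w t = n + a}.ncard := by
  have hS : {s : ℕ × T | a * s.1 + w s.2 = n + a} =
      (fun s : ℕ × T => (s.1 + 1, s.2)) '' {s : ℕ × T | a * s.1 + w s.2 = n} ∪
      (fun t : T => ((0 : ℕ), t)) '' {t : T | w t = n + a} := by
    ext ⟨x, t⟩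
    simp only [Set.mem_ofPred_eq, Set.mem_union, Set.mem_image, Prod.mk.injEq, Prod.exists]
    constructor
    · intro h
      rcases x with _ | x
      · right; exact ⟨t, by simpa using h, rfl, rfl⟩
      · left; exact ⟨x, t, by rw [Nat.mul_succ] at h; omega, rfl, rfl⟩
    · rintro (⟨x', t', h, rfl, rfl⟩ | ⟨t', h, rfl, rfl⟩)
      · rw [Nat.mul_succ]; omega
      · simpa using h
  have f := hfin (n + a)
  rw [hS] at f ⊢
  rw [Set.ncard_union_eq ?_ (f.subset Set.subset_union_left) (f.subset Set.subset_union_right),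
    Set.ncard_image_of_injective, Set.ncard_image_of_injective]
  · intro s t h; simpa using h
  · rintro ⟨x, s⟩ ⟨y, t⟩ h; simpa using h
  · rw [Set.disjoint_left]
    rintro _ ⟨s, _, rfl⟩ ⟨t, _, h⟩
    simp at h

lemma finite_solutions2 (p q n : ℕ) (hp : 0 < p) (hq : 0 < q) :
    {s : ℕ × ℕ | p * s.1 + q * s.2 = n}.Finite := by
  refine (Set.finite_Iic ((n, n) : ℕ × ℕ)).subset ?_
  rintro ⟨x, y⟩ h
  simp only [Set.mem_ofPred_eq] at h
  simp only [Set.mem_Iic, Prod.mk_le_mk]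
  constructor <;> nlinarith [Nat.zero_le (p * x), Nat.zero_le (q * y)]

lemma finite_solutions3 (a b c n : ℕ) (ha : 0 < a) (hb : 0 < b) (hc : 0 < c) :
    {s : ℕ × ℕ × ℕ | a * s.1 + (b * s.2.1 + c * s.2.2) = n}.Finite := by
  refine (Set.finite_Iic ((n, n, n) : ℕ × ℕ × ℕ)).subset ?_
  rintro ⟨x, y, z⟩ h
  simp only [Set.mem_ofPred_eq] at h
  simp only [Set.mem_Iic, Prod.mk_le_mk]
  have := Nat.zero_le (a * x)
  have := Nat.zero_le (b * y)
  have := Nat.zero_le (c * z)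
  refine ⟨?_, ?_, ?_⟩ <;> nlinarith

lemma count3_add (a b c n : ℕ) (ha : 0 < a) (hb : 0 < b) (hc : 0 < c) :
    count3 a b c (n + a) = count3 a b c n + count2 b c (n + a) := by
  have h := ncard_first_coordinate a n (fun t : ℕ × ℕ => b * t.1 + c * t.2)
    (fun n => finite_solutions3 a b c n ha hb hc)
  simpa only [count3, count2, add_assoc] using h

lemma ncard_multiples (q k : ℕ) (hq : 0 < q) :
    {t : ℕ | q * t = k}.ncard = if (k : ZMod q) = 0 then 1 else 0 := by
  split_ifs with h
  · rw [ZMod.natCast_eq_zero_iff] at h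
    obtain ⟨t, rfl⟩ := h
    rw [Set.ncard_eq_one]
    refine ⟨t, ?_⟩
    ext s
    simp [hq.ne']
  · have : {t : ℕ | q * t = k} = ∅ := by
      ext t
      simp only [Set.mem_ofPred_eq, Set.mem_empty_iff_false, iff_false]
      rintro rfl
      simp at h
    rw [this, Set.ncard_empty]

lemma count2_add (p q n : ℕ) (hp : 0 < p) (hq : 0 < q) :
    count2 p q (n + p) = count2 p q n + if ((n + p : ℕ) : ZMod q) = 0 then 1 else 0 := by
  rw [← ncard_multiples q _ hq]
  exact ncard_first_coordinate p n (fun t : ℕ => q * t)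
    (fun n => finite_solutions2 p q n hp hq)

lemma count2_comm (p q n : ℕ) : count2 p q n = count2 q p n := by
  unfold count2
  rw [← Set.ncard_image_of_injective {s : ℕ × ℕ | q * s.1 + p * s.2 = n} Prod.swap_injective]
  congr 1
  ext ⟨x, y⟩
  simp [add_comm]

lemma count3_rotate (a b c n : ℕ) : count3 a b c n = count3 b c a n := by
  unfold count3
  refine Set.ncard_congr (fun s _ => (s.2.1, s.2.2, s.1)) ?_ ?_ ?_
  · rintro ⟨x, y, z⟩ h
    simp only [Set.mem_ofPred_eq] at h ⊢
    omega
  · rintro ⟨x, y, z⟩ ⟨x', y', z'⟩ _ _ h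
    simp only [Prod.mk.injEq] at h ⊢
    tauto
  · rintro ⟨y, z, x⟩ h
    refine ⟨(x, y, z), ?_, rfl⟩
    simp only [Set.mem_ofPred_eq] at h ⊢
    omega

lemma count2_zero (p q : ℕ) (hp : 0 < p) (hq : 0 < q) : count2 p q 0 = 1 := by
  unfold count2
  rw [Set.ncard_eq_one]
  refine ⟨(0, 0), ?_⟩
  ext ⟨x, y⟩
  simp [hp.ne', hq.ne']

lemma count3_zero (a b c : ℕ) (ha : 0 < a) (hb : 0 < b) (hc : 0 < c) : count3 a b c 0 = 1 := by
  unfold count3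
  rw [Set.ncard_eq_one]
  refine ⟨(0, 0, 0), ?_⟩
  ext ⟨x, y, z⟩
  simp [ha.ne', hb.ne', hc.ne', and_assoc]

/-- Popoviciu's expression for the number of solutions of `p y + q z = n`. -/
def popoviciu (p q n : ℕ) : ℚ :=
  (n : ℚ) / (p * q) - residue ((n : ZMod p) * (q : ZMod p)⁻¹) / p
    - residue ((n : ZMod q) * (p : ZMod q)⁻¹) / q + 1

lemma isUnit_natCast_zmod {p q : ℕ} (h : Nat.Coprime p q) : IsUnit (p : ZMod q) :=
  (ZMod.isUnit_iff_coprime p q).2 h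

lemma popoviciu_add (p q n : ℕ) (hp : 0 < p) (hq : 0 < q) (hpq : Nat.Coprime p q) :
    popoviciu p q (n + p) = popoviciu p q n + if ((n + p : ℕ) : ZMod q) = 0 then 1 else 0 := by
  have : NeZero q := ⟨hq.ne'⟩
  have hp' : (p : ℚ) ≠ 0 := Nat.cast_ne_zero.2 hp.ne'
  have hq' : (q : ℚ) ≠ 0 := Nat.cast_ne_zero.2 hq.ne'
  have hu := isUnit_natCast_zmod hpq
  have h := residue_sub_one (((n + p : ℕ) : ZMod q) * (p : ZMod q)⁻¹)
  simp only [(isUnit_zmod_inv hu).mul_left_eq_zero] at h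
  have e : ((n + p : ℕ) : ZMod q) * (p : ZMod q)⁻¹ - 1 = (n : ZMod q) * (p : ZMod q)⁻¹ := by
    push_cast
    rw [add_mul, ZMod.mul_inv_of_unit _ hu, add_sub_cancel_right]
  rw [e] at h
  unfold popoviciu
  rw [h]
  have e2 : ((n + p : ℕ) : ZMod p) = n := by simp
  rw [e2]
  split_ifs <;> push_cast <;> field_simp <;> ring

lemma popoviciu_comm (p q n : ℕ) : popoviciu p q n = popoviciu q p n := by
  unfold popoviciu
  rw [mul_comm (p : ℚ) q]
  ring

theorem count2_eq_popoviciu (p q n : ℕ) (hp : 0 < p) (hq : 0 < q) (hpq : Nat.Coprime p q) :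
    (count2 p q n : ℚ) = popoviciu p q n := by
  have h := eq_zero_value_of_coprime_periods (fun n => (count2 p q n : ℚ) - popoviciu p q n)
    p q hq hpq ?_ ?_ n
  · have h0 : popoviciu p q 0 = 1 := by simp [popoviciu, residue]
    simp only [count2_zero p q hp hq, h0] at h
    push_cast at h
    linarith
  · intro n
    simp only [popoviciu_add p q n hp hq hpq, count2_add p q n hp hq]
    push_cast
    ring
  · intro n
    simp only [popoviciu_comm p q, count2_comm p q, popoviciu_add q p n hq hp hpq.symm,
      count2_add q p n hq hp]
    push_cast
    ring

/-! ### Three variables -/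

/-- The claimed closed form for the number of solutions of `a x + b y + c z = n`. -/
def closedForm (a b c n : ℕ) : ℚ :=
  (n : ℚ) * (n + a + b + c) / (2 * a * b * c) + dedekindPart a b c n + dedekindPart b c a n
    + dedekindPart c a b n - 2

lemma closedForm_rotate (a b c n : ℕ) : closedForm a b c n = closedForm b c a n := by
  unfold closedForm
  rw [show (2 * a * b * c : ℚ) = 2 * b * c * a by ring]
  ring

lemma closedForm_add (a b c n : ℕ) (ha : 0 < a) (hb : 0 < b) (hc : 0 < c)
    (hab : Nat.Coprime a b) (hbc : Nat.Coprime b c) (hac : Nat.Coprime a c) :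
    closedForm a b c (n + a) = closedForm a b c n + popoviciu b c (n + a) := by
  have : NeZero b := ⟨hb.ne'⟩
  have : NeZero c := ⟨hc.ne'⟩
  have ha' : (a : ℚ) ≠ 0 := Nat.cast_ne_zero.2 ha.ne'
  have hb' : (b : ℚ) ≠ 0 := Nat.cast_ne_zero.2 hb.ne'
  have hc' : (c : ℚ) ≠ 0 := Nat.cast_ne_zero.2 hc.ne'
  have e1 := dedekindPart_sub_right (isUnit_natCast_zmod hbc.symm) (isUnit_natCast_zmod hab)
    ((n + a : ℕ) : ZMod b)
  have e2 := dedekindPart_sub_left (isUnit_natCast_zmod hac) (isUnit_natCast_zmod hbc)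
    ((n + a : ℕ) : ZMod c)
  have c1 : ((n + a : ℕ) : ZMod b) - a = n := by push_cast; ring
  have c2 : ((n + a : ℕ) : ZMod c) - a = n := by push_cast; ring
  have c3 : ((n + a : ℕ) : ZMod a) = n := by simp
  rw [c1] at e1
  rw [c2] at e2
  have e3 : ((n + a : ℕ) : ℚ) * ((n + a : ℕ) + a + b + c) / (2 * a * b * c)
      - (n : ℚ) * (n + a + b + c) / (2 * a * b * c)
      = ((n + a : ℕ) : ℚ) / (b * c) + 1 / (2 * b) + 1 / (2 * c) := by
    push_cast
    field_simp
    ring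
  have e4 : ((b : ℚ) + 1) / (2 * b) = 1 / 2 + 1 / (2 * b) := by field_simp
  have e5 : ((c : ℚ) + 1) / (2 * c) = 1 / 2 + 1 / (2 * c) := by field_simp
  unfold closedForm popoviciu
  rw [c3]
  linear_combination e1 + e2 + e3 - e4 - e5

theorem count3_eq_closedForm (a b c n : ℕ) (ha : 0 < a) (hb : 0 < b) (hc : 0 < c)
    (hab : Nat.Coprime a b) (hbc : Nat.Coprime b c) (hac : Nat.Coprime a c) :
    (count3 a b c n : ℚ) = closedForm a b c n := by
  have h := eq_zero_value_of_coprime_periods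
    (fun n => (count3 a b c n : ℚ) - closedForm a b c n) a b hb hab ?_ ?_ n
  · have : NeZero a := ⟨ha.ne'⟩
    have : NeZero b := ⟨hb.ne'⟩
    have : NeZero c := ⟨hc.ne'⟩
    have h0 : closedForm a b c 0 = 1 := by
      unfold closedForm
      simp only [Nat.cast_zero]
      rw [dedekindPart_zero (isUnit_natCast_zmod hab.symm) (isUnit_natCast_zmod hac.symm),
        dedekindPart_zero (isUnit_natCast_zmod hbc.symm) (isUnit_natCast_zmod hab),
        dedekindPart_zero (isUnit_natCast_zmod hac) (isUnit_natCast_zmod hbc)]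
      norm_num
    simp only [count3_zero a b c ha hb hc, h0] at h
    push_cast at h
    linarith
  · intro n
    simp only [count3_add a b c n ha hb hc, closedForm_add a b c n ha hb hc hab hbc hac,
      Nat.cast_add (count3 a b c n), count2_eq_popoviciu b c _ hb hc hbc]
    ring
  · intro n
    simp only [count3_rotate a b c, closedForm_rotate a b c, count3_add b c a n hb hc ha,
      closedForm_add b c a n hb hc ha hbc hac.symm hab.symm, Nat.cast_add (count3 b c a n),
      count2_eq_popoviciu c a _ hc ha hac.symm]
    ring

/-! ### Translation into floor sums -/

/-- If `k ∈ {1, …, m}` represents `-n / p` and `d` represents `p / q` modulo `m`, then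
`dedekindPart` is the contribution of `m` to the formula with floor sums. -/
lemma dedekindPart_eq_floor_sum (m p q n k d : ℕ) (hm : 0 < m) (hp : Nat.Coprime p m)
    (hq : Nat.Coprime q m) (hk : (p : ℤ) * k ≡ -(n : ℤ) [ZMOD (m : ℤ)]) (hkr : 1 ≤ k ∧ k ≤ m)
    (hd : (q : ℤ) * d ≡ (p : ℤ) [ZMOD (m : ℤ)]) :
    dedekindPart m p q n = (k : ℚ) * (m + 1 - d * (k - 1)) / (2 * m)
      + (∑ j ∈ Finset.Icc 1 (k - 1), (j * d) / m : ℕ) := by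
  have : NeZero m := ⟨hm.ne'⟩
  have hm' : (m : ℚ) ≠ 0 := Nat.cast_ne_zero.2 hm.ne'
  have hpp : (p : ZMod m) * (p : ZMod m)⁻¹ = 1 := ZMod.mul_inv_of_unit _ (isUnit_natCast_zmod hp)
  have hqq : (q : ZMod m) * (q : ZMod m)⁻¹ = 1 := ZMod.mul_inv_of_unit _ (isUnit_natCast_zmod hq)
  have hk' : (p : ZMod m) * k = -n := by
    have := (ZMod.intCast_eq_intCast_iff _ _ m).2 hk
    push_cast at this
    exact this
  have hd' : (q : ZMod m) * d = p := by
    have := (ZMod.intCast_eq_intCast_iff _ _ m).2 hd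
    push_cast at this
    exact this
  have hval : m - ((n : ZMod m) * (p : ZMod m)⁻¹).val = k := by
    have e : (n : ZMod m) * (p : ZMod m)⁻¹ = ((m - k : ℕ) : ZMod m) := by
      rw [Nat.cast_sub hkr.2, ZMod.natCast_self]
      linear_combination ((p : ZMod m)⁻¹) * hk' - (k : ZMod m) * hpp
    rw [e, ZMod.val_cast_of_lt (by omega)]
    omega
  have hterm : ∀ j : ℕ, residue ((j : ZMod m) * (p : ZMod m) * (q : ZMod m)⁻¹)
      = (j : ℚ) * d - m * ((j * d / m : ℕ) : ℚ) := by
    intro j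
    have e : (j : ZMod m) * p * (q : ZMod m)⁻¹ = ((j * d : ℕ) : ZMod m) := by
      push_cast
      linear_combination (-(j : ZMod m) * (q : ZMod m)⁻¹) * hd' + (j : ZMod m) * (d : ZMod m) * hqq
    unfold residue
    rw [e, ZMod.val_natCast]
    have := Nat.div_add_mod (j * d) m
    have h2 : (m : ℚ) * ((j * d / m : ℕ) : ℚ) + ((j * d % m : ℕ) : ℚ) = (j : ℚ) * d := by
      exact_mod_cast this
    linarith
  have hsum : ∀ i : ℕ, ∑ j ∈ Finset.range (i + 1),
      (((m : ℚ) + 1) / 2 - residue ((j : ZMod m) * (p : ZMod m) * (q : ZMod m)⁻¹))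
      = (i + 1 : ℚ) * (m + 1 - d * i) / 2
        + m * ((∑ j ∈ Finset.Icc 1 i, (j * d) / m : ℕ) : ℚ) := by
    intro i
    induction i with
    | zero => simp [residue]
    | succ i ih =>
      rw [Finset.sum_range_succ, ih, hterm, Finset.sum_Icc_succ_top (by omega)]
      push_cast
      ring
  obtain ⟨i, rfl⟩ : ∃ i, k = i + 1 := ⟨k - 1, by omega⟩
  unfold dedekindPart
  rw [hval, hsum]
  simp only [Nat.add_sub_cancel]
  push_cast
  field_simp
  ring

/-- Binner (2020): exact formula (with floor-sums) for the number of nonnegative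
integer solutions of `a*x + b*y + c*z = n` when `a`, `b`, `c` are pairwise coprime. -/
theorem binner_count_three_vars
    (a b c n : ℕ) (ha : 0 < a) (hb : 0 < b) (hc : 0 < c) (hn : 0 < n)
    (hab : Nat.Coprime a b) (hbc : Nat.Coprime b c) (hac : Nat.Coprime a c)
    (b1 c1 c2 a2 a3 b3 : ℕ)
    (hb1 : (b : ℤ) * b1 ≡ -(n : ℤ) [ZMOD (a : ℤ)]) (hb1r : 1 ≤ b1 ∧ b1 ≤ a)
    (hc1 : (c : ℤ) * c1 ≡ (b : ℤ) [ZMOD (a : ℤ)]) (hc1r : 1 ≤ c1 ∧ c1 ≤ a)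
    (hc2 : (c : ℤ) * c2 ≡ -(n : ℤ) [ZMOD (b : ℤ)]) (hc2r : 1 ≤ c2 ∧ c2 ≤ b)
    (ha2 : (a : ℤ) * a2 ≡ (c : ℤ) [ZMOD (b : ℤ)]) (ha2r : 1 ≤ a2 ∧ a2 ≤ b)
    (ha3 : (a : ℤ) * a3 ≡ -(n : ℤ) [ZMOD (c : ℤ)]) (ha3r : 1 ≤ a3 ∧ a3 ≤ c)
    (hb3 : (b : ℤ) * b3 ≡ (a : ℤ) [ZMOD (c : ℤ)]) (hb3r : 1 ≤ b3 ∧ b3 ≤ c)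
    (N1 : ℤ)
    (hN1 : N1 = (n : ℤ) * ((n : ℤ) + a + b + c)
        + (c : ℤ) * b * b1 * ((a : ℤ) + 1 - (c1 : ℤ) * ((b1 : ℤ) - 1))
        + (a : ℤ) * c * c2 * ((b : ℤ) + 1 - (a2 : ℤ) * ((c2 : ℤ) - 1))
        + (b : ℤ) * a * a3 * ((c : ℤ) + 1 - (b3 : ℤ) * ((a3 : ℤ) - 1))) :
    (Set.ncard {p : ℕ × ℕ × ℕ | a * p.1 + b * p.2.1 + c * p.2.2 = n} : ℚ) =
      (N1 : ℚ) / (2 * (a : ℚ) * b * c)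
      + (∑ j ∈ Finset.Icc 1 (b1 - 1), (j * c1) / a : ℕ)
      + (∑ j ∈ Finset.Icc 1 (c2 - 1), (j * a2) / b : ℕ)
      + (∑ j ∈ Finset.Icc 1 (a3 - 1), (j * b3) / c : ℕ)
      - 2 := by
  have ha' : (a : ℚ) ≠ 0 := Nat.cast_ne_zero.2 ha.ne'
  have hb' : (b : ℚ) ≠ 0 := Nat.cast_ne_zero.2 hb.ne'
  have hc' : (c : ℚ) ≠ 0 := Nat.cast_ne_zero.2 hc.ne'
  have h := count3_eq_closedForm a b c n ha hb hc hab hbc hac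
  unfold count3 closedForm at h
  rw [h, dedekindPart_eq_floor_sum a b c n b1 c1 ha hab.symm hac.symm hb1 hb1r hc1,
    dedekindPart_eq_floor_sum b c a n c2 a2 hb hbc.symm hab hc2 hc2r ha2,
    dedekindPart_eq_floor_sum c a b n a3 b3 hc hac hbc ha3 ha3r hb3, hN1]
  generalize (∑ j ∈ Finset.Icc 1 (b1 - 1), (j * c1) / a : ℕ) = s1
  generalize (∑ j ∈ Finset.Icc 1 (c2 - 1), (j * a2) / b : ℕ) = s2
  generalize (∑ j ∈ Finset.Icc 1 (a3 - 1), (j * b3) / c : ℕ) = s3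
  push_cast
  field_simp
  ring
end

section
/- Let $a$, $b$, $c$, and $K$ be positive integers such that $b < a$, $c < a$, $\gcd(a,c) = 1$, and $K = \lfloor bc/a \rfloor$. Then $\sum_{i=1}^{b} \lfloor ic/a \rfloor + \sum_{i=1}^{K} \lfloor ia/c \rfloor = bK$. -/
/-!
The identity is a double count of the lattice points `(i, j)` of the rectangle `[1, b] × [1, K]`,
split by the line `j * a = i * c`. In column `i` the points on or below the line number `⌊i*c/a⌋`,
and in row `j` those on or above it number `⌊j*a/c⌋` (`div_eq_sum_indicator`); the rectangle is
large enough to hold all of them because `K = ⌊b*c/a⌋`. No point of the rectangle is on the line: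
since `gcd(a, c) = 1`, that would force `a ∣ i`, while `0 < i ≤ b < a`.
-/

/-- A quotient `n / d` bounded by `m` counts the positive multiples `j * d ≤ n` with `j ≤ m`. -/
theorem div_eq_sum_indicator {n d m : ℕ} (hd : 0 < d) (h : n / d ≤ m) :
    n / d = ∑ j ∈ Finset.Icc 1 m, if j * d ≤ n then 1 else 0 := by
  rw [← Finset.card_filter]
  have : (Finset.Icc 1 m).filter (fun j => j * d ≤ n) = Finset.Icc 1 (n / d) := by
    ext j
    simp only [Finset.mem_filter, Finset.mem_Icc, ← Nat.le_div_iff_mul_le hd]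
    omega
  simp [this]

/-- Binner's reciprocity relation: if `b < a`, `c < a`, `gcd(a,c) = 1`, and
`K = ⌊b*c/a⌋`, then `∑_{i=1}^{b} ⌊i*c/a⌋ + ∑_{i=1}^{K} ⌊i*a/c⌋ = b*K`. -/
theorem binner_reciprocity
    (a b c K : ℕ) (ha : 0 < a) (hb : 0 < b) (hc : 0 < c) (hK : 0 < K)
    (hba : b < a) (hca : c < a) (hac : Nat.Coprime a c) (hKdef : K = b * c / a) :
    (∑ i ∈ Finset.Icc 1 b, (i * c) / a) + (∑ i ∈ Finset.Icc 1 K, (i * a) / c) = b * K := by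
  have hKa : K * a ≤ b * c := hKdef ▸ Nat.div_mul_le_self (b * c) a
  have columns : ∀ i ∈ Finset.Icc 1 b,
      i * c / a = ∑ j ∈ Finset.Icc 1 K, if j * a ≤ i * c then 1 else 0 := by
    intro i hi
    refine div_eq_sum_indicator ha ?_
    rw [hKdef]
    exact Nat.div_le_div_right (Nat.mul_le_mul_right c (Finset.mem_Icc.mp hi).2)
  have rows : ∀ j ∈ Finset.Icc 1 K,
      j * a / c = ∑ i ∈ Finset.Icc 1 b, if i * c ≤ j * a then 1 else 0 := by
    intro j hj
    refine div_eq_sum_indicator hc (Nat.div_le_of_le_mul ?_)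
    calc j * a ≤ K * a := Nat.mul_le_mul_right a (Finset.mem_Icc.mp hj).2
      _ ≤ c * b := by rwa [mul_comm c b]
  rw [Finset.sum_congr rfl columns, Finset.sum_congr rfl rows, Finset.sum_comm (s := Finset.Icc 1 K),
    ← Finset.sum_add_distrib]
  simp_rw [← Finset.sum_add_distrib]
  have one : ∀ i ∈ Finset.Icc 1 b, ∀ j ∈ Finset.Icc 1 K,
      ((if j * a ≤ i * c then 1 else 0) + (if i * c ≤ j * a then 1 else 0) : ℕ) = 1 := by
    intro i hi j _
    have hi := Finset.mem_Icc.mp hi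
    have hne : i * c ≠ j * a := fun h =>
      have hdvd : a ∣ i := hac.dvd_of_dvd_mul_right (h ▸ dvd_mul_left a j)
      absurd (Nat.le_of_dvd hi.1 hdvd) (by omega)
    split_ifs <;> omega
  rw [Finset.sum_congr rfl fun i hi => Finset.sum_congr rfl (one i hi)]
  simp
end

section
/- Let $i \ge 3$ and $n \ge 1$ be integers. Define $B'_1$ as the unique integer with $B'_1 \equiv (-1)^i n F_{i-2} \pmod{F_i}$ and $1 \le B'_1 \le F_i$; define $C'_2$ as the unique integer with $C'_2 \equiv (-1)^i n F_i \pmod{F_{i+1}}$ and $1 \le C'_2 \le F_{i+1}$; define $A'_3$ as the unique integer with $A'_3 \equiv (-1)^i n F_{i+1} \pmod{F_{i+2}}$ and $1 \le A'_3 \le F_{i+2}$. Let $N_2 = n(n+F_i+F_{i+1}+F_{i+2}) + F_{i+2}F_{i+1}B'_1(F_i+1-(B'_1-1)) + F_iF_{i+2}C'_2(F_{i+1}+1-(C'_2-1)) + F_{i+1}F_iA'_3(F_{i+2}+1-(F_{i+2}-1)(A'_3-1))$. Then the number of triples $(x,y,z)$ of nonnegative integers with $F_i x + F_{i+1} y +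 F_{i+2} z = n$ equals $\frac{N_2}{2 F_i F_{i+1} F_{i+2}} + \frac{(A'_3-1)(A'_3-2)}{2} - 2$. -/
/-!
Put `a = F_i`, `b = F_{i+1}`, `c = F_{i+2} = a + b`. Cassini's identity turns the three congruences
into
`a ∣ n + b * B`, `b ∣ n + a * C`, `c ∣ n - b * A`,
and from then on only `c = a + b` and the coprimality of `a` and `b` matter.

The solutions of `a * x + b * y = n` are `x = b * u - C`, `y = a * v - B` with `u, v ≥ 1` and
`u + v = q`, where `a * b * q = n + b * B + a * C`; so there are `q - 1` of them
(`ncard_pairs`). Sorting the triples by `z = 0` or `z ≥ 1` shows that the number of triples for `n`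
is `q - 1` plus the number of triples for `n - c` (`ncard_triples_of_le`), or just `q - 1` if
`n < c` (`ncard_triples_of_lt`).

The formula satisfies the same recursion: passing from `n` to `n - c` leaves `A` fixed and raises
`B` and `C` cyclically by one. For `n < c` it reduces to the identity `base_identity`, which
is checked by writing `n = b * y - a * k` with `A = y + k`, `B ≡ -y [ZMOD a]` and `C ≡ k [ZMOD b]`.
-/

/-- The solutions of `a * x + b * y = n` in natural numbers. -/
def pairs (a b n : ℕ) : Set (ℕ × ℕ) := {p | a * p.1 + b * p.2 = n}

/-- The solutions of `a * x + b * y + c * z = n` in natural numbers. -/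
def triples (a b c n : ℕ) : Set (ℕ × ℕ × ℕ) := {p | a * p.1 + b * p.2.1 + c * p.2.2 = n}

lemma triples_finite {a b c : ℕ} (ha : 0 < a) (hb : 0 < b) (hc : 0 < c) (n : ℕ) :
    (triples a b c n).Finite := by
  apply (Set.finite_Iic ((n, n, n) : ℕ × ℕ × ℕ)).subset
  rintro ⟨x, y, z⟩ h
  simp only [triples, Set.mem_ofPred_eq] at h
  simp only [Set.mem_Iic, Prod.mk_le_mk]
  refine ⟨?_, ?_, ?_⟩ <;> nlinarith

lemma pairs_finite {a b : ℕ} (ha : 0 < a) (hb : 0 < b) (n : ℕ) : (pairs a b n).Finite := by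
  apply (Set.finite_Iic ((n, n) : ℕ × ℕ)).subset
  rintro ⟨x, y⟩ h
  simp only [pairs, Set.mem_ofPred_eq] at h
  simp only [Set.mem_Iic, Prod.mk_le_mk]
  refine ⟨?_, ?_⟩ <;> nlinarith

/-- Both `a` and `b` divide `n + b * B + a * C`, hence so does their product. -/
lemma exists_quotient {a b n B C : ℕ} (hab : Nat.Coprime a b) (hB : a ∣ n + b * B)
    (hC : b ∣ n + a * C) : ∃ q, a * b * q = n + b * B + a * C := by
  have h1 : a ∣ n + b * B + a * C := dvd_add hB (dvd_mul_right _ _)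
  have h2 : b ∣ n + b * B + a * C := by
    have : n + b * B + a * C = (n + a * C) + b * B := by ring
    rw [this]
    exact dvd_add hC (dvd_mul_right _ _)
  obtain ⟨q, hq⟩ := hab.mul_dvd_of_dvd_of_dvd h1 h2
  exact ⟨q, hq.symm⟩

/-- Popoviciu's formula: the solutions are `(b * u - C, a * v - B)` with `u, v ≥ 1` and
`u + v = q`; here `u = t + 1`. -/
lemma ncard_pairs {a b n B C q : ℕ} (hab : Nat.Coprime a b)
    (hB : a ∣ n + b * B) (hB1 : 1 ≤ B) (hB2 : B ≤ a)
    (hC : b ∣ n + a * C) (hC1 : 1 ≤ C) (hC2 : C ≤ b)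
    (hq : a * b * q = n + b * B + a * C) : (pairs a b n).ncard + 1 = q := by
  have ha : 0 < a := by omega
  have hb : 0 < b := by omega
  have hq0 : 1 ≤ q := by
    rcases Nat.eq_zero_or_pos q with h | h
    · subst h
      nlinarith [Nat.mul_pos hb hB1]
    · exact h
  have himg : pairs a b n =
      (fun t : ℕ => (b * (t + 1) - C, a * (q - 1 - t) - B)) '' (Finset.range (q - 1) : Set ℕ) := by
    ext ⟨x, y⟩
    simp only [pairs, Set.mem_ofPred_eq, Set.mem_image, Finset.coe_range, Set.mem_Iio,
      Prod.mk.injEq]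
    constructor
    · intro h
      have hx : b ∣ x + C := by
        have h1 : b ∣ a * (x + C) := by
          have h2 : n + a * C = a * (x + C) + b * y := by rw [← h]; ring
          rw [h2] at hC
          exact (Nat.dvd_add_left (dvd_mul_right _ _)).1 hC
        exact hab.symm.dvd_of_dvd_mul_left h1
      have hy : a ∣ y + B := by
        have h1 : a ∣ b * (y + B) := by
          have h2 : n + b * B = b * (y + B) + a * x := by rw [← h]; ring
          rw [h2] at hB
          exact (Nat.dvd_add_left (dvd_mul_right _ _)).1 hB
        exact hab.dvd_of_dvd_mul_left h1
      obtain ⟨u, hu⟩ := hx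
      obtain ⟨v, hv⟩ := hy
      have huv : u + v = q := by
        have h1 : a * b * (u + v) = a * b * q := by
          calc a * b * (u + v) = a * (b * u) + b * (a * v) := by ring
            _ = a * (x + C) + b * (y + B) := by rw [hu, hv]
            _ = (a * x + b * y) + b * B + a * C := by ring
            _ = a * b * q := by rw [h, hq]
        exact Nat.eq_of_mul_eq_mul_left (Nat.mul_pos ha hb) h1
      have hu0 : u ≠ 0 := by rintro rfl; omega
      have hv0 : v ≠ 0 := by rintro rfl; omega
      refine ⟨u - 1, by omega, ?_, ?_⟩
      · rw [Nat.sub_add_cancel (by omega)]; omega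
      · have h1 : q - 1 - (u - 1) = v := by omega
        rw [h1]; omega
    · rintro ⟨t, ht, rfl, rfl⟩
      obtain ⟨v, hv⟩ : ∃ v, q = t + 1 + (v + 1) := ⟨q - t - 2, by omega⟩
      have h1 : q - 1 - t = v + 1 := by omega
      rw [h1]
      have h2 : C ≤ b * (t + 1) := by nlinarith
      have h3 : B ≤ a * (v + 1) := by nlinarith
      subst hv
      zify [h2, h3] at hq ⊢
      linear_combination hq
  rw [himg, Set.InjOn.ncard_image, Set.ncard_coe_finset, Finset.card_range]
  · omega
  · intro s _ t _ hst
    have h1 : b * (s + 1) - C = b * (t + 1) - C := (Prod.mk.inj hst).1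
    have h2 : C ≤ b * (t + 1) := by nlinarith
    have h3 : C ≤ b * (s + 1) := by nlinarith
    have h4 : b * (s + 1) = b * (t + 1) := by omega
    have h5 := Nat.eq_of_mul_eq_mul_left hb h4
    omega

lemma ncard_triples_of_lt {a b c n : ℕ} (hn : n < c) :
    (triples a b c n).ncard = (pairs a b n).ncard := by
  have h : triples a b c n = (fun p : ℕ × ℕ => (p.1, p.2, 0)) '' pairs a b n := by
    ext ⟨x, y, z⟩
    simp only [triples, pairs, Set.mem_ofPred_eq, Set.mem_image, Prod.exists, Prod.mk.injEq]
    constructor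
    · intro h
      rcases Nat.eq_zero_or_pos z with rfl | hz
      · exact ⟨x, y, by simpa using h, rfl, rfl, rfl⟩
      · nlinarith
    · rintro ⟨x', y', h, rfl, rfl, rfl⟩
      simpa using h
  rw [h, Set.ncard_image_of_injective]
  rintro ⟨x, y⟩ ⟨x', y'⟩ h
  simpa using h

lemma ncard_triples_of_le {a b c : ℕ} (ha : 0 < a) (hb : 0 < b) (hc : 0 < c) (m : ℕ) :
    (triples a b c (m + c)).ncard = (pairs a b (m + c)).ncard + (triples a b c m).ncard := by
  have h : triples a b c (m + c) = (fun p : ℕ × ℕ => (p.1, p.2, 0)) '' pairs a b (m + c) ∪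
      (fun p : ℕ × ℕ × ℕ => (p.1, p.2.1, p.2.2 + 1)) '' triples a b c m := by
    ext ⟨x, y, z⟩
    simp only [triples, pairs, Set.mem_ofPred_eq, Set.mem_image, Prod.exists, Prod.mk.injEq,
      Set.mem_union]
    constructor
    · intro h
      rcases z with _ | z
      · exact Or.inl ⟨x, y, by simpa using h, rfl, rfl, rfl⟩
      · exact Or.inr ⟨x, y, z, by linarith, rfl, rfl, rfl⟩
    · rintro (⟨x', y', h, rfl, rfl, rfl⟩ | ⟨x', y', z', h, rfl, rfl, rfl⟩)
      · simpa using h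
      · linarith
  rw [h, Set.ncard_union_eq _ ((pairs_finite ha hb _).image _) ((triples_finite ha hb hc _).image _),
    Set.ncard_image_of_injective, Set.ncard_image_of_injective]
  · rintro ⟨x, y, z⟩ ⟨x', y', z'⟩ h
    simpa using h
  · rintro ⟨x, y⟩ ⟨x', y'⟩ h
    simpa using h
  · rw [Set.disjoint_left]
    rintro _ ⟨p, _, rfl⟩ ⟨p', _, h⟩
    simp at h

/-- The only multiple of `m` in the interval `(-m, 2 * m)` besides `0` is `m`. -/
lemma eq_zero_or_eq_of_dvd {m t : ℤ} (h : m ∣ t) (h1 : -m < t) (h2 : t < 2 * m) :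
    t = 0 ∨ t = m := by
  obtain ⟨w, rfl⟩ := h
  have hm : 0 < m := by linarith
  have hw1 : -1 < w := by by_contra! hw; nlinarith
  have hw2 : w < 2 := by by_contra! hw; nlinarith
  have : w = 0 ∨ w = 1 := by omega
  rcases this with rfl | rfl <;> simp

/-- The identity `n² / (abc) + B(a - B) / a + C(b - C) / b = A(c - A) / c` with `c = a + b`,
cleared of denominators; it expresses that the counting formula is right for `0 ≤ n < c`. -/
lemma base_identity {a b n A B C : ℤ} (ha : 0 < a) (hb : 0 < b) (hab : IsCoprime a b)
    (hn0 : 0 ≤ n) (hn : n < a + b)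
    (hB : a ∣ n + b * B) (hB1 : 1 ≤ B) (hB2 : B ≤ a)
    (hC : b ∣ n + a * C) (hC1 : 1 ≤ C) (hC2 : C ≤ b)
    (hA : a + b ∣ n - b * A) (hA1 : 1 ≤ A) (hA2 : A ≤ a + b) :
    n ^ 2 + b * (a + b) * (B * (a - B)) + a * (a + b) * (C * (b - C))
      = a * b * (A * (a + b - A)) := by
  obtain ⟨w, hw⟩ := hA
  obtain ⟨k, rfl⟩ : ∃ k, w = -k := ⟨-w, by ring⟩
  obtain ⟨y, rfl⟩ : ∃ y, A = y + k := ⟨A - k, by ring⟩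
  obtain rfl : n = b * y - a * k := by linear_combination hw
  have hk0 : 0 ≤ k := by by_contra! h; nlinarith
  have hk1 : k ≤ b := by by_contra! h; nlinarith
  have hy0 : 0 ≤ y := by by_contra! h; nlinarith
  have hy1 : y ≤ a := by by_contra! h; nlinarith
  have hBy : a ∣ y + B - a := by
    have h1 : a ∣ b * (y + B) := by
      have h2 : b * (y + B) = b * y - a * k + b * B + a * k := by ring
      rw [h2]
      exact dvd_add hB (dvd_mul_right _ _)
    exact dvd_sub_self_right.2 (hab.dvd_of_dvd_mul_left h1)
  have hCk : b ∣ C - k := by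
    have h1 : b ∣ a * (C - k) := by
      have h2 : a * (C - k) = b * y - a * k + a * C - b * y := by ring
      rw [h2]
      exact dvd_sub hC (dvd_mul_right _ _)
    exact hab.symm.dvd_of_dvd_mul_left h1
  -- `t ↦ t * (a - t)` takes the same value at `B` and at `y`, also when `B = y = a`.
  have eB : B * (a - B) = y * (a - y) := by
    rcases eq_zero_or_eq_of_dvd hBy (by linarith) (by linarith) with h | h
    · obtain rfl : B = a - y := by linarith
      ring
    · obtain rfl : B = a := by linarith
      obtain rfl : y = B := by linarith
      ring
  have eC : C * (b - C) = k * (b - k) := by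
    rcases eq_zero_or_eq_of_dvd hCk (by linarith) (by linarith) with h | h
    · obtain rfl : C = k := by linarith
      ring
    · obtain rfl : C = b := by linarith
      obtain rfl : k = 0 := by linarith
      ring
  rw [eB, eC]
  ring

/-- Going from `m + c` to `m` raises the residue `B` cyclically by one within `[1, a]`. The value
of `t * (a + 2 - t)` at the new residue is given by the same polynomial in `B` whether or not the
residue wraps around, because `t * (a + 2 - t)` agrees at `1` and `a + 1`. -/
lemma exists_shift {a b m B : ℕ} (hB : a ∣ m + (a + b) + b * B) (hB1 : 1 ≤ B) (hB2 : B ≤ a) :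
    ∃ B', a ∣ m + b * B' ∧ 1 ≤ B' ∧ B' ≤ a ∧
      (B' * (a + 2 - B') : ℤ) = (B + 1) * (a + 1 - B) := by
  have h : a ∣ m + b * (B + 1) := by
    have h1 : m + (a + b) + b * B = m + b * (B + 1) + a := by ring
    rw [h1] at hB
    exact (Nat.dvd_add_left dvd_rfl).1 hB
  rcases Nat.lt_or_eq_of_le hB2 with hlt | rfl
  · exact ⟨B + 1, h, by omega, by omega, by push_cast; ring⟩
  · refine ⟨1, ?_, le_rfl, hB1, by push_cast; ring⟩
    have h1 : m + b * (B + 1) = m + b * 1 + B * b := by ring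
    rw [h1] at h
    exact (Nat.dvd_add_left (dvd_mul_right _ _)).1 h

/-- The counting formula for `c = a + b`, cleared of denominators. -/
lemma count_formula {a b : ℕ} (hab : Nat.Coprime a b) (n : ℕ) : ∀ (B C A : ℕ),
    a ∣ n + b * B → 1 ≤ B → B ≤ a → b ∣ n + a * C → 1 ≤ C → C ≤ b →
    (a + b : ℤ) ∣ n - b * A → 1 ≤ A → A ≤ a + b →
    (2 * a * b * (a + b) * (triples a b (a + b) n).ncard : ℤ) =
      n * (n + 2 * (a + b)) + b * (a + b) * (B * (a + 2 - B)) + a * (a + b) * (C * (b + 2 - C))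
        - a * b * (A * (a + b - A)) - 2 * a * b * (a + b) := by
  induction n using Nat.strong_induction_on with
  | _ n ih =>
  intro B C A hB hB1 hB2 hC hC1 hC2 hA hA1 hA2
  have ha : 0 < a := by omega
  have hb : 0 < b := by omega
  obtain ⟨q, hq⟩ := exists_quotient hab hB hC
  have hp := ncard_pairs hab hB hB1 hB2 hC hC1 hC2 hq
  rw [← hp] at hq
  rcases Nat.lt_or_ge n (a + b) with hn | hn
  · have hbase := base_identity (a := a) (b := b) (n := n) (A := A) (B := B) (C := C)
      (by exact_mod_cast ha) (by exact_mod_cast hb) (Nat.isCoprime_iff_coprime.2 hab)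
      (by positivity) (by exact_mod_cast hn)
      (by exact_mod_cast hB) (by exact_mod_cast hB1) (by exact_mod_cast hB2)
      (by exact_mod_cast hC) (by exact_mod_cast hC1) (by exact_mod_cast hC2)
      hA (by exact_mod_cast hA1) (by exact_mod_cast hA2)
    rw [ncard_triples_of_lt hn]
    zify at hq
    linear_combination 2 * (a + b : ℤ) * hq - hbase
  · obtain ⟨m, rfl⟩ : ∃ m, n = m + (a + b) := ⟨n - (a + b), by omega⟩
    obtain ⟨B', hB', hB1', hB2', eB⟩ := exists_shift hB hB1 hB2
    obtain ⟨C', hC', hC1', hC2', eC⟩ :=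
      exists_shift (a := b) (b := a) (m := m) (B := C) (by rwa [add_comm b a]) hC1 hC2
    have hA' : (a + b : ℤ) ∣ m - b * A := by
      have h1 : (((m + (a + b) : ℕ) : ℤ) - b * A) = (m - b * A) + (a + b) := by push_cast; ring
      rw [h1] at hA
      exact (dvd_add_left dvd_rfl).1 hA
    have := ih m (by omega) B' C' A hB' hB1' hB2' hC' hC1' hC2' hA' hA1 hA2
    rw [ncard_triples_of_le ha hb (by omega) m]
    rw [eB, eC] at this
    zify at hq
    push_cast
    linear_combination this + 2 * (a + b : ℤ) * hq

/-- Cassini's identity, written in terms of `F_{j+1}` and `F_{j+2}`. -/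
lemma cassini (j : ℕ) :
    ((-1) ^ (j + 3) : ℤ) = (Nat.fib (j + 2) : ℤ) ^ 2 - Nat.fib (j + 1) * Nat.fib (j + 2)
      - (Nat.fib (j + 1) : ℤ) ^ 2 := by
  induction j with
  | zero => simp
  | succ j ih =>
    have h : Nat.fib (j + 1 + 2) = Nat.fib (j + 1) + Nat.fib (j + 2) := Nat.fib_add_two
    rw [h, show j + 1 + 3 = (j + 3) + 1 by ring, pow_succ, ih]
    push_cast
    ring

/-- Main theorem for Fibonacci triplets: exact formula for the number of nonnegative
integer solutions of `F_i*x + F_{i+1}*y + F_{i+2}*z = n`. -/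
theorem count_fib_triplet
    (i n : ℕ) (hi : 3 ≤ i) (hn : 1 ≤ n)
    (B1 C2 A3 : ℕ)
    (hB1 : (B1 : ℤ) ≡ (-1) ^ i * n * Nat.fib (i - 2) [ZMOD (Nat.fib i : ℤ)])
    (hB1r : 1 ≤ B1 ∧ B1 ≤ Nat.fib i)
    (hC2 : (C2 : ℤ) ≡ (-1) ^ i * n * Nat.fib i [ZMOD (Nat.fib (i + 1) : ℤ)])
    (hC2r : 1 ≤ C2 ∧ C2 ≤ Nat.fib (i + 1))
    (hA3 : (A3 : ℤ) ≡ (-1) ^ i * n * Nat.fib (i + 1) [ZMOD (Nat.fib (i + 2) : ℤ)])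
    (hA3r : 1 ≤ A3 ∧ A3 ≤ Nat.fib (i + 2))
    (N2 : ℤ)
    (hN2 : N2 = (n : ℤ) * ((n : ℤ) + Nat.fib i + Nat.fib (i + 1) + Nat.fib (i + 2))
        + (Nat.fib (i + 2) : ℤ) * Nat.fib (i + 1) * B1
            * ((Nat.fib i : ℤ) + 1 - ((B1 : ℤ) - 1))
        + (Nat.fib i : ℤ) * Nat.fib (i + 2) * C2
            * ((Nat.fib (i + 1) : ℤ) + 1 - ((C2 : ℤ) - 1))
        + (Nat.fib (i + 1) : ℤ) * Nat.fib i * A3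
            * ((Nat.fib (i + 2) : ℤ) + 1 - ((Nat.fib (i + 2) : ℤ) - 1) * ((A3 : ℤ) - 1))) :
    (Set.ncard {p : ℕ × ℕ × ℕ |
        Nat.fib i * p.1 + Nat.fib (i + 1) * p.2.1 + Nat.fib (i + 2) * p.2.2 = n} : ℚ) =
      (N2 : ℚ) / (2 * (Nat.fib i : ℚ) * Nat.fib (i + 1) * Nat.fib (i + 2))
      + ((A3 : ℚ) - 1) * ((A3 : ℚ) - 2) / 2 - 2 := by
  obtain ⟨j, rfl⟩ : ∃ j, i = j + 3 := ⟨i - 3, by omega⟩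
  have hs := cassini j
  have hs2 : ((-1) ^ (j + 3) : ℤ) * (-1) ^ (j + 3) = 1 := by
    rw [← mul_pow]; simp
  have hcop : Nat.Coprime (Nat.fib (j + 3)) (Nat.fib (j + 3 + 1)) := Nat.fib_coprime_fib_succ _
  have e3 : Nat.fib (j + 3) = Nat.fib (j + 1) + Nat.fib (j + 2) := Nat.fib_add_two
  have e4 : Nat.fib (j + 3 + 1) = Nat.fib (j + 2) + Nat.fib (j + 3) := Nat.fib_add_two
  have e5 : Nat.fib (j + 3 + 2) = Nat.fib (j + 3) + Nat.fib (j + 3 + 1) := Nat.fib_add_two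
  have e1 : j + 3 - 2 = j + 1 := by omega
  rw [e1] at hB1
  generalize ((-1) ^ (j + 3) : ℤ) = s at *
  generalize Nat.fib (j + 3 + 2) = c at *
  generalize Nat.fib (j + 3 + 1) = b at *
  generalize Nat.fib (j + 3) = a at *
  generalize Nat.fib (j + 2) = v at *
  generalize Nat.fib (j + 1) = u at *
  subst e5
  have z3 : (a : ℤ) = u + v := by exact_mod_cast e3
  have z4 : (b : ℤ) = v + a := by exact_mod_cast e4
  -- By Cassini, `s + b * u = a * v`, `s + a ^ 2 = b * v` and `s - b ^ 2 = -(a + b) * a`; together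
  -- with `s ^ 2 = 1` these give the three divisibilities.
  have dB : a ∣ n + b * B1 := by
    zify
    obtain ⟨w, hw⟩ := hB1.dvd
    refine ⟨n * s * v - b * w, ?_⟩
    simp only [z4, z3] at hw ⊢
    linear_combination (-(u + 2 * v) : ℤ) * hw - n * hs2 + n * s * hs
  have dC : b ∣ n + a * C2 := by
    zify
    obtain ⟨w, hw⟩ := hC2.dvd
    refine ⟨n * s * v - a * w, ?_⟩
    simp only [z4, z3] at hw ⊢
    linear_combination (-(u + v) : ℤ) * hw - n * hs2 + n * s * hs
  have dA : (a + b : ℤ) ∣ n - b * A3 := by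
    obtain ⟨w, hw⟩ := hA3.dvd
    refine ⟨b * w - n * s * a, ?_⟩
    push_cast at hw
    simp only [z4, z3] at hw ⊢
    linear_combination (u + 2 * v : ℤ) * hw - n * hs2 + n * s * hs
  have key := count_formula hcop n B1 C2 A3 dB hB1r.1 hB1r.2 dC hC2r.1 hC2r.2 dA hA3r.1 hA3r.2
  have ha : (a : ℚ) ≠ 0 := by
    have : a ≠ 0 := by omega
    exact_mod_cast this
  have hb : (b : ℚ) ≠ 0 := by
    have : b ≠ 0 := by omega
    exact_mod_cast this
  have hc : (a + b : ℚ) ≠ 0 := by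
    have : a + b ≠ 0 := by omega
    exact_mod_cast this
  have keyQ := congrArg (Int.cast : ℤ → ℚ) key
  subst hN2
  change ((triples a b (a + b) n).ncard : ℚ) = _
  push_cast at keyQ ⊢
  field_simp
  linear_combination keyQ
end

section
/- Let $i \ge 2$ and $n \ge 1$ be integers. Define $B''_1$ as the unique integer with $5 B''_1 \equiv (-1)^{i+1} n L_{i-2} \pmod{L_i}$ and $1 \le B''_1 \le L_i$; define $C''_2$ as the unique integer with $5 C''_2 \equiv (-1)^{i+1} n L_i \pmod{L_{i+1}}$ and $1 \le C''_2 \le L_{i+1}$; define $A''_3$ as the unique integer with $5 A''_3 \equiv (-1)^{i+1} n L_{i+1} \pmod{L_{i+2}}$ and $1 \le A''_3 \le L_{i+2}$. Let $N_3 = n(n+L_i+L_{i+1}+L_{i+2}) + L_{i+2}L_{i+1}B''_1(L_i+1-(B''_1-1)) + L_iL_{i+2}C''_2(L_{i+1}+1-(C''_2-1)) + L_{i+1}L_iA''_3(L_{i+2}+1-(L_{i+2}-1)(A''_3-1))$. Then the number of triples $(x,y,z)$ of nonnegative integers with $L_i x + L_{i+1} y + L_{i+2} z = n$ equals $\frac{N_3}{2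 L_i L_{i+1} L_{i+2}} + \frac{(A''_3-1)(A''_3-2)}{2} - 2$. -/
/-!
Write `a = L_i`, `b = L_{i+1}`, so that `L_{i+2} = a + b`. Cassini's identity
`L_{k+1}^2 - L_k L_{k+2} = 5 (-1)^{k+1}`, together with the invertibility of `5` modulo every
Lucas number, turns the three congruences into
`a ∣ b B + n`, `b ∣ a C + n` and `a + b ∣ b A - n`. After this the Lucas numbers play no further
role: the formula holds for every coprime pair `a, b` (`count_of_coprime`).

For such a pair, put `u = x + z` and `v = y + z`. The equation becomes `a u + b v = n`, and each
solution `(u, v)` comes from `min u v + 1` triples, one for each `0 ≤ z ≤ min u v`. There is an `m`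
with `n = a b m - a C - b B`, and the ranges of `B` and `C` make the nonnegative
solutions exactly `v = a k - B`, `u = b (m - k) - C` with `1 ≤ k ≤ m - 1` (`ncard_eq_sum`).
Along this progression `v - u = A + (a + b) (k - s)` for a fixed `s` with `1 ≤ s ≤ m`, so that
`1 ≤ A ≤ a + b` says that the minimum is `v` for `k < s` and `u` for `k ≥ s`. The count is therefore
a sum of two arithmetic progressions, and substituting the expressions for `n` and `A` identifies
it with the stated closed form.
-/

/-- The Lucas numbers: `L_0 = 2`, `L_1 = 1`, `L_{n+2} = L_{n+1} + L_n`. -/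
def lucas : ℕ → ℕ
  | 0 => 2
  | 1 => 1
  | n + 2 => lucas (n + 1) + lucas n

lemma lucas_add_two (k : ℕ) : lucas (k + 2) = lucas (k + 1) + lucas k := by
  simp [lucas]

lemma lucas_coprime_succ (k : ℕ) : Nat.Coprime (lucas k) (lucas (k + 1)) := by
  induction k with
  | zero => simp [lucas]
  | succ k ih =>
    rw [lucas_add_two]
    simpa [Nat.coprime_comm] using ih

/-- Cassini's identity for the Lucas numbers. -/
lemma lucas_cassini (k : ℕ) :
    (lucas (k + 1) : ℤ) ^ 2 - lucas k * lucas (k + 2) = 5 * (-1) ^ (k + 1) := by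
  induction k with
  | zero => simp [lucas]
  | succ k ih =>
    have h1 := lucas_add_two k
    have h2 := lucas_add_two (k + 1)
    zify at h1 h2
    rw [h2, pow_succ]
    rw [h1] at ih ⊢
    linear_combination -ih

/-- This holds because the Lucas sequence modulo `5` is periodic with period `2, 1, 3, 4`. -/
lemma lucas_coprime_five (k : ℕ) : IsCoprime (lucas k : ℤ) 5 := by
  have key : ∀ k, (lucas k % 5 = 2 ∧ lucas (k + 1) % 5 = 1) ∨
      (lucas k % 5 = 1 ∧ lucas (k + 1) % 5 = 3) ∨ (lucas k % 5 = 3 ∧ lucas (k + 1) % 5 = 4) ∨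
      (lucas k % 5 = 4 ∧ lucas (k + 1) % 5 = 2) := by
    intro k
    induction k with
    | zero => simp [lucas]
    | succ k ih =>
      rw [show k + 1 + 1 = k + 2 from rfl, lucas_add_two]
      omega
  have h5 : ¬ 5 ∣ lucas k := by have := key k; omega
  have : Nat.Coprime (lucas k) 5 :=
    ((Nat.Prime.coprime_iff_not_dvd (by norm_num)).2 h5).symm
  exact_mod_cast Nat.isCoprime_iff_coprime.2 this

/-- When `n = a b (m + 1) - a C - b B`, the pairs `u = x + z`, `v = y + z` with `a u + b v = n` are
`v = a (k + 1) - B`, `u = b (m - k) - C` for `k < m`, and each carries `min u v + 1` triples.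
The truncated subtractions are exact because `B ≤ a` and `C ≤ b`. -/
lemma ncard_eq_sum (a b n B C m : ℕ) (hab : Nat.Coprime a b)
    (hB : 1 ≤ B) (hBa : B ≤ a) (hC : 1 ≤ C) (hCb : C ≤ b)
    (hn : n + a * C + b * B = a * b * (m + 1)) :
    Set.ncard {p : ℕ × ℕ × ℕ | a * p.1 + b * p.2.1 + (b + a) * p.2.2 = n} =
      ∑ k ∈ Finset.range m, (min (a * (k + 1) - B) (b * (m - k) - C) + 1) := by
  let F : (Σ _ : ℕ, ℕ) → ℕ × ℕ × ℕ := fun q =>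
    (b * (m - q.1) - C - q.2, a * (q.1 + 1) - B - q.2, q.2)
  let T : Finset (Σ _ : ℕ, ℕ) := (Finset.range m).sigma
    fun k => Finset.range (min (a * (k + 1) - B) (b * (m - k) - C) + 1)
  have hv : ∀ k : ℕ, B ≤ a * (k + 1) := fun k => by nlinarith [Nat.zero_le (a * k)]
  have hu : ∀ k : ℕ, k < m → C ≤ b * (m - k) := fun k hk => by
    have : 1 ≤ m - k := by omega
    nlinarith
  have hset : {p : ℕ × ℕ × ℕ | a * p.1 + b * p.2.1 + (b + a) * p.2.2 = n} =
      ((T.image F : Finset (ℕ × ℕ × ℕ)) : Set (ℕ × ℕ × ℕ)) := by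
    ext ⟨x, y, z⟩
    simp only [Set.mem_ofPred_eq, Finset.coe_image, Set.mem_image, Finset.mem_coe, T, F,
      Finset.mem_sigma, Finset.mem_range, Prod.mk.injEq, Sigma.exists]
    constructor
    · intro h
      have hdvd : a ∣ y + z + B := by
        apply hab.dvd_of_dvd_mul_left
        have h1 : a ∣ a * (x + z + C) + b * (y + z + B) := ⟨b * (m + 1), by linarith⟩
        exact (Nat.dvd_add_right (dvd_mul_right _ _)).1 h1
      obtain ⟨k, hk⟩ := hdvd
      have ha : 0 < a := by omega
      have hk0 : k ≠ 0 := by rintro rfl; omega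
      obtain ⟨k, rfl⟩ := Nat.exists_eq_succ_of_ne_zero hk0
      have hxu : x + z + C + b * (k + 1) = b * (m + 1) := by
        apply Nat.eq_of_mul_eq_mul_left ha
        have : b * (y + z + B) = b * (a * (k + 1)) := by rw [hk]
        linarith
      have hkm : k < m := by
        by_contra hcon
        have : b * (m + 1) ≤ b * (k + 1) := Nat.mul_le_mul_left _ (by omega)
        omega
      have hxu' : x + z + C = b * (m - k) := by
        obtain ⟨r, rfl⟩ := Nat.exists_eq_add_of_lt hkm
        rw [show k + r + 1 - k = r + 1 by omega]
        linarith
      rw [Nat.succ_eq_add_one] at hk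
      exact ⟨k, z, ⟨hkm, by omega⟩, by omega, by omega, rfl⟩
    · rintro ⟨k, z', ⟨hkm, hz⟩, hx, hy, rfl⟩
      have h1 := hv k
      have h2 := hu k hkm
      have hx' : x + z' + C = b * (m - k) := by omega
      have hy' : y + z' + B = a * (k + 1) := by omega
      have hmk : b * (m - k) + b * (k + 1) = b * (m + 1) := by
        rw [← mul_add]; congr 1; omega
      have e1 : a * (x + z' + C) + b * (y + z' + B) = a * b * (m + 1) := by
        rw [hx', hy', mul_assoc, ← hmk]; ring
      linarith
  have hinj : Set.InjOn F (T : Set (Σ _ : ℕ, ℕ)) := by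
    rintro ⟨k, z⟩ h1 ⟨k', z'⟩ h2 h
    simp only [Finset.mem_coe, T, Finset.mem_sigma, Finset.mem_range] at h1 h2
    simp only [F, Prod.mk.injEq] at h
    obtain ⟨-, hy, rfl⟩ := h
    have e1 := hv k
    have e2 := hv k'
    have : a * (k + 1) = a * (k' + 1) := by omega
    have : k + 1 = k' + 1 := Nat.eq_of_mul_eq_mul_left (by omega) this
    obtain rfl : k = k' := by omega
    rfl
  rw [hset, Set.ncard_coe_finset, Finset.card_image_of_injOn hinj, Finset.card_sigma]
  simp

lemma sum_arith_up (a B : ℚ) (s : ℕ) :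
    ∑ k ∈ Finset.range s, (a * ((k : ℚ) + 1) - B + 1) =
      a * s * (s + 1) / 2 - (B - 1) * s := by
  induction s with
  | zero => simp
  | succ s ih => rw [Finset.sum_range_succ, ih]; push_cast; ring

lemma sum_arith_down (b C : ℚ) (r : ℕ) :
    ∑ j ∈ Finset.range r, (b * ((r : ℚ) - j) - C + 1) =
      b * r * (r + 1) / 2 - (C - 1) * r := by
  have h : ∀ j ∈ Finset.range r, b * ((r : ℚ) - j) - C + 1 =
      b * (((r - 1 - j : ℕ) : ℚ) + 1) - C + 1 := by
    intro j hj
    have hj := Finset.mem_range.1 hj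
    have : ((r - 1 - j : ℕ) : ℚ) + 1 + j = r := by norm_cast; omega
    rw [← this]; ring
  rw [Finset.sum_congr rfl h,
    Finset.sum_range_reflect (fun k : ℕ => b * ((k : ℚ) + 1) - C + 1) r, sum_arith_up]

/-- The number of representations of `n` by `a, b, a + b` for arbitrary coprime `a, b`, where `B`,
`C`, `A` are the least positive residues of `-n / b`, `-n / a`, `n / b` modulo `a`, `b`, `a + b`. -/
lemma count_of_coprime (a b n B C A : ℕ) (hab : Nat.Coprime a b)
    (hB : 1 ≤ B) (hBa : B ≤ a) (hC : 1 ≤ C) (hCb : C ≤ b) (hA : 1 ≤ A) (hAc : A ≤ b + a)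
    (hBd : (a : ℤ) ∣ b * B + n) (hCd : (b : ℤ) ∣ a * C + n)
    (hAd : ((b : ℤ) + a) ∣ b * A - n) :
    (Set.ncard {p : ℕ × ℕ × ℕ | a * p.1 + b * p.2.1 + (b + a) * p.2.2 = n} : ℚ) =
      ((n : ℚ) * (n + a + b + (b + a)) + (b + a) * b * B * (a + 1 - (B - 1))
        + a * (b + a) * C * (b + 1 - (C - 1))
        + b * a * A * ((b + a) + 1 - ((b + a) - 1) * (A - 1))) / (2 * a * b * (b + a))
      + ((A : ℚ) - 1) * (A - 2) / 2 - 2 := by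
  have ha : 0 < a := by omega
  have hb : 0 < b := by omega
  have hdvd : a * b ∣ n + a * C + b * B := by
    apply hab.mul_dvd_of_dvd_of_dvd
    · have h : a ∣ b * B + n := by exact_mod_cast hBd
      rw [show n + a * C + b * B = b * B + n + a * C by ring]
      exact h.add (dvd_mul_right _ _)
    · have h : b ∣ a * C + n := by exact_mod_cast hCd
      rw [show n + a * C + b * B = a * C + n + b * B by ring]
      exact h.add (dvd_mul_right _ _)
  obtain ⟨m, hm⟩ := hdvd
  have hm0 : m ≠ 0 := by
    rintro rfl
    have : 0 < a * C := by positivity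
    omega
  -- The switching index: `v - u = A + (a + b) (k - s)` along the progression,
  -- with `k` counted from `1`.
  have hsd : ((b : ℤ) + a) ∣ (A : ℤ) + B - C + b * m := by
    have hco : IsCoprime ((b : ℤ) + a) b := by
      have := (Nat.isCoprime_iff_coprime.2 hab)
      simpa [add_comm] using this.add_mul_left_left 1
    apply hco.dvd_of_dvd_mul_left
    have hz : (n : ℤ) + a * C + b * B = a * b * m := by exact_mod_cast hm
    have : (b : ℤ) * ((A : ℤ) + B - C + b * m) = (b * A - n) + (b + a) * (b * m - C) := by
      linear_combination hz
    rw [this]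
    exact hAd.add (dvd_mul_right _ _)
  obtain ⟨s, hs⟩ := hsd
  have hs1 : 1 ≤ s := by
    by_contra hcon
    have h1 : ((b : ℤ) + a) * s ≤ 0 := mul_nonpos_of_nonneg_of_nonpos (by positivity) (by omega)
    have h2 : (b : ℤ) * 1 ≤ b * m := by gcongr; omega
    omega
  have hsm : s ≤ m := by
    by_contra hcon
    have h1 : ((b : ℤ) + a) * (m + 1) ≤ (b + a) * s := by gcongr; omega
    have h2 : (a : ℤ) * 1 ≤ a * m := by gcongr; omega
    linarith [(by exact_mod_cast hAc : (A : ℤ) ≤ b + a), (by exact_mod_cast hBa : (B : ℤ) ≤ a),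
      (by exact_mod_cast hC : (1 : ℤ) ≤ C)]
  obtain ⟨t, rfl⟩ : ∃ t : ℕ, s = t + 1 := ⟨(s - 1).toNat, by omega⟩
  obtain ⟨r, rfl⟩ : ∃ r : ℕ, m = t + r + 1 := ⟨m - t - 1, by omega⟩
  rw [ncard_eq_sum a b n B C (t + r) hab hB hBa hC hCb hm, Finset.sum_range_add]
  push_cast at hs
  have hAz : (A : ℤ) ≤ b + a := by exact_mod_cast hAc
  have hAz1 : (1 : ℤ) ≤ A := by exact_mod_cast hA
  have first : ∀ k ∈ Finset.range t,
      ((min (a * (k + 1) - B) (b * (t + r - k) - C) + 1 : ℕ) : ℚ) = a * ((k : ℚ) + 1) - B + 1 := by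
    intro k hk
    have hk := Finset.mem_range.1 hk
    obtain ⟨d, rfl⟩ := Nat.exists_eq_add_of_lt hk
    have hB' : B ≤ a * (k + 1) := by nlinarith [Nat.zero_le (a * k)]
    rw [show k + d + 1 + r - k = d + 1 + r by omega]
    have hle : a * (k + 1) + C ≤ b * (d + 1 + r) + B := by
      zify
      push_cast at hs
      nlinarith [mul_nonneg (by positivity : (0 : ℤ) ≤ b + a) (Int.natCast_nonneg d)]
    rw [min_eq_left (by omega)]
    push_cast [Nat.cast_sub hB']
    ring
  have second : ∀ j ∈ Finset.range r,
      ((min (a * (t + j + 1) - B) (b * (t + r - (t + j)) - C) + 1 : ℕ) : ℚ)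
        = b * ((r : ℚ) - j) - C + 1 := by
    intro j hj
    have hj := Finset.mem_range.1 hj
    obtain ⟨d, rfl⟩ := Nat.exists_eq_add_of_lt hj
    have hC' : C ≤ b * (d + 1) := by nlinarith [Nat.zero_le (b * d)]
    rw [show t + (j + d + 1) - (t + j) = d + 1 by omega]
    have hle : b * (d + 1) + B ≤ a * (t + j + 1) + C := by
      zify
      push_cast at hs
      nlinarith [mul_nonneg (by positivity : (0 : ℤ) ≤ b + a) (Int.natCast_nonneg j)]
    rw [min_eq_right (by omega)]
    push_cast [Nat.cast_sub hC']
    ring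
  rw [Nat.cast_add, Nat.cast_sum, Nat.cast_sum, Finset.sum_congr rfl first,
    Finset.sum_congr rfl second, sum_arith_up, sum_arith_down]
  have hnQ : (n : ℚ) = a * b * (t + r + 1) - a * C - b * B := by
    have : (n : ℚ) + a * C + b * B = a * b * (t + r + 1) := by exact_mod_cast hm
    linarith
  have hAQ : (A : ℚ) = (b + a) * (t + 1) - B + C - b * (t + r + 1) := by
    have : (A : ℚ) + B - C + b * (t + r + 1) = (b + a) * (t + 1) := by exact_mod_cast hs
    linarith
  have haQ : (a : ℚ) ≠ 0 := by positivity
  have hbQ : (b : ℚ) ≠ 0 := by positivity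
  have hcQ : (b : ℚ) + a ≠ 0 := by positivity
  rw [hnQ, hAQ]
  field_simp
  ring

/-- Main theorem for Lucas triplets: exact formula for the number of nonnegative
integer solutions of `L_i*x + L_{i+1}*y + L_{i+2}*z = n`. -/
theorem count_lucas_triplet
    (i n : ℕ) (hi : 2 ≤ i) (hn : 1 ≤ n)
    (B1 C2 A3 : ℕ)
    (hB1 : 5 * (B1 : ℤ) ≡ (-1) ^ (i + 1) * n * lucas (i - 2) [ZMOD (lucas i : ℤ)])
    (hB1r : 1 ≤ B1 ∧ B1 ≤ lucas i)
    (hC2 : 5 * (C2 : ℤ) ≡ (-1) ^ (i + 1) * n * lucas i [ZMOD (lucas (i + 1) : ℤ)])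
    (hC2r : 1 ≤ C2 ∧ C2 ≤ lucas (i + 1))
    (hA3 : 5 * (A3 : ℤ) ≡ (-1) ^ (i + 1) * n * lucas (i + 1) [ZMOD (lucas (i + 2) : ℤ)])
    (hA3r : 1 ≤ A3 ∧ A3 ≤ lucas (i + 2))
    (N3 : ℤ)
    (hN3 : N3 = (n : ℤ) * ((n : ℤ) + lucas i + lucas (i + 1) + lucas (i + 2))
        + (lucas (i + 2) : ℤ) * lucas (i + 1) * B1
            * ((lucas i : ℤ) + 1 - ((B1 : ℤ) - 1))
        + (lucas i : ℤ) * lucas (i + 2) * C2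
            * ((lucas (i + 1) : ℤ) + 1 - ((C2 : ℤ) - 1))
        + (lucas (i + 1) : ℤ) * lucas i * A3
            * ((lucas (i + 2) : ℤ) + 1 - ((lucas (i + 2) : ℤ) - 1) * ((A3 : ℤ) - 1))) :
    (Set.ncard {p : ℕ × ℕ × ℕ |
        lucas i * p.1 + lucas (i + 1) * p.2.1 + lucas (i + 2) * p.2.2 = n} : ℚ) =
      (N3 : ℚ) / (2 * (lucas i : ℚ) * lucas (i + 1) * lucas (i + 2))
      + ((A3 : ℚ) - 1) * ((A3 : ℚ) - 2) / 2 - 2 := by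
  obtain ⟨j, rfl⟩ := Nat.exists_eq_add_of_le' hi
  rw [show j + 2 - 2 = j by omega] at hB1
  have hc := lucas_add_two (j + 2)
  have r1 : (lucas (j + 2) : ℤ) = lucas (j + 1) + lucas j := by exact_mod_cast lucas_add_two j
  have r2 : (lucas (j + 2 + 1) : ℤ) = lucas (j + 2) + lucas (j + 1) := by
    exact_mod_cast lucas_add_two (j + 1)
  have r3 : (lucas (j + 2 + 2) : ℤ) = lucas (j + 2 + 1) + lucas (j + 2) := by exact_mod_cast hc
  have k1 := lucas_cassini j
  have hsq : ((-1 : ℤ) ^ (j + 1)) ^ 2 = 1 := by rw [← pow_mul, mul_comm, pow_mul]; simp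
  rw [show (-1 : ℤ) ^ (j + 2 + 1) = (-1) ^ (j + 1) by rw [pow_succ, pow_succ, pow_succ]; ring]
    at hB1 hC2 hA3
  generalize (-1 : ℤ) ^ (j + 1) = e at *
  -- In each case five times the claim follows from Cassini's identity, and `5` is cancelled.
  have hBd : (lucas (j + 2) : ℤ) ∣ lucas (j + 2 + 1) * B1 + n := by
    apply (lucas_coprime_five _).dvd_of_dvd_mul_left
    obtain ⟨q, hq⟩ := hB1.symm.dvd
    rw [r2]
    refine ⟨(lucas (j + 2) + lucas (j + 1)) * q + e * n * lucas (j + 1), ?_⟩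
    rw [r1] at k1 hq ⊢
    linear_combination (2 * (lucas (j + 1) : ℤ) + lucas j) * hq - e * n * k1 - 5 * n * hsq
  have hCd : (lucas (j + 2 + 1) : ℤ) ∣ lucas (j + 2) * C2 + n := by
    apply (lucas_coprime_five _).dvd_of_dvd_mul_left
    obtain ⟨q, hq⟩ := hC2.symm.dvd
    refine ⟨lucas (j + 2) * q + e * n * lucas (j + 1), ?_⟩
    rw [r2, r1] at hq ⊢
    rw [r1] at k1
    linear_combination (lucas (j + 1) + lucas j : ℤ) * hq - e * n * k1 - 5 * n * hsq
  have hAd : ((lucas (j + 2 + 1) : ℤ) + lucas (j + 2)) ∣ lucas (j + 2 + 1) * A3 - n := by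
    rw [← r3]
    apply (lucas_coprime_five _).dvd_of_dvd_mul_left
    obtain ⟨q, hq⟩ := hA3.symm.dvd
    refine ⟨lucas (j + 2 + 1) * q + e * n * lucas (j + 2), ?_⟩
    rw [r3, r2, r1] at hq ⊢
    rw [r1] at k1
    linear_combination (2 * (lucas (j + 1) : ℤ) + lucas j) * hq + e * n * k1 + 5 * n * hsq
  have main := count_of_coprime (lucas (j + 2)) (lucas (j + 2 + 1)) n B1 C2 A3
    (lucas_coprime_succ _) hB1r.1 hB1r.2 hC2r.1 hC2r.2 hA3r.1 (hc ▸ hA3r.2) hBd hCd hAd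
  rw [hc, main, hN3, hc]
  push_cast
  ring
end
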